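/- For every k ≥ 0 the derivations Y'_{8k+1}, …, Y'_{8k+8} are nonzero and satisfy: ⁅D, Y'_{8k+1}⁆ = −(E 1) • Y'_{8k}, ⁅D, Y'_{8k+2}⁆ = −(E (−2)) • Y'_{8k}, ⁅D, Y'_{8k+3}⁆ = (E (−2)) • Y'_{8k+1} + 2 • (E 1) • Y'_{8k+2}, ⁅D, Y'_{8k+4}⁆ = 3 • (E 1) • Y'_{8k+3}, ⁅D, Y'_{8k+5}⁆ = −(E 1) • Y'_{8k+4}, ⁅D, Y'_{8k+6}⁆ = −(E 1) • Y'_{8k+5}, ⁅D, Y'_{8k+7}⁆ = −(E (−2)) • Y'_{8k+5}, ⁅D, Y'_{8k+8}⁆ = (E 1) • Y'_{8k+7} + 2 • (E (−2)) • Y'_{8k+6}; moreover ⁅Y'₂, Y'_{8k+2}⁆ = ⁅Y'₂, Y'_{8k+3}⁆ = ⁅Y'₂, Y'_{8k+4}⁆ = ⁅Y'₂, Y'_{8k+7}⁆ = 0. -/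

import Mathlib

/-!
The proof rests on two facts. Firstly, a derivation which is *vertical* (kills every `E q`) and
commutes with `D` vanishes (`eq_zero_of_lie_D`): verticality and `D (E 1) = u₁ * E 1` force
`Z u₁ = 0`, and `u_{n+1} = D uₙ` does the rest. Secondly, `⁅D, X_{E q}⁆ = -(E q) • X₀`, and every
`Y'_m` with `m ≥ 1` is vertical and an eigenvector of `ad X₀`; by the Jacobi identity
`⁅D, ⁅X_{E q}, Z⁆⁆ = -w • E q • Z + ⁅X_{E q}, ⁅D, Z⁆⁆` for `Z` of weight `w`
(`lie_lie_of_weight`).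

The second fact computes `⁅D, Y'_m⁆` along one period of the sequence. The brackets with `Y'₁`
or `Y'₂` that are not given by the recursion are identified by computing their bracket with `D`
and applying the first fact. The input needed for a period (`BlockStart`) is reproduced at its
end (`block_step`), so induction on `k` gives all the relations.

For the nonvanishing, `Z u_{n+1} = D (Z uₙ) - ⁅D, Z⁆ uₙ` shows that if `⁅D, Z⁆` kills
`u₁, …, uₙ` and sends `u_{n+1}` to `c • E q`, then `Z` kills `u₁, …, u_{n+1}` and sends `u_{n+2}`
to `-c • E q` (`Lead.of_lie`). Hence each `Y'_m` has an explicit leading value, and the constant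
`c` of one period becomes `-27 * c` in the next. In the two relations with a sum on the right,
the leading values add up to three times one of them and do not cancel.
-/

set_option synthInstance.maxHeartbeats 1000000
set_option maxHeartbeats 1000000

noncomputable section

/-- The algebra of "quasipolynomials": the group algebra of `ℤ` (group element `q`
modelling `e^{q·u}`) with coefficients in polynomials in countably many variables
(variable of index `n-1` modelling the `n`-th `x`-derivative of `u`). -/
abbrev QP : Type := AddMonoidAlgebra (MvPolynomial ℕ ℂ) ℤ

/-- `E q` models `e^{q·u}`. -/
def E (q : ℤ) : QP := AddMonoidAlgebra.single q 1

/-- `uvar n` models the `n`-th derivative `∂ⁿu/∂xⁿ` (for `n ≥ 1`); it is the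
polynomial generator of index `n - 1`. -/
def uvar (n : ℕ) : QP := AddMonoidAlgebra.single 0 (MvPolynomial.X (n - 1))

/-- `D` is the total `x`-derivative: the unique `ℂ`-derivation of `QP` with
`D uₙ = u_{n+1}` for `n ≥ 1` and `D (E q) = q • (u₁ * E q)`. -/
def IsD (D : Derivation ℂ QP QP) : Prop :=
  (∀ n : ℕ, 1 ≤ n → D (uvar n) = uvar (n + 1)) ∧
  (∀ q : ℤ, D (E q) = q • (uvar 1 * E q))

/-- `X₀` models `∂/∂u`: the unique `ℂ`-derivation with `X₀ uₙ = 0` and `X₀ (E q) = q • E q`. -/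
def IsX0 (X : Derivation ℂ QP QP) : Prop :=
  (∀ n : ℕ, 1 ≤ n → X (uvar n) = 0) ∧ (∀ q : ℤ, X (E q) = q • E q)

/-- `X_f` is the unique `ℂ`-derivation with `X_f (E q) = 0` for all `q` and
`X_f uₙ = D^[n-1] f` for all `n ≥ 1`. -/
def IsXf (D : Derivation ℂ QP QP) (f : QP) (Xf : Derivation ℂ QP QP) : Prop :=
  (∀ q : ℤ, Xf (E q) = 0) ∧ (∀ n : ℕ, 1 ≤ n → Xf (uvar n) = (⇑D)^[n - 1] f)

/-! ### One period of the sequence in an abstract `ℂ`-algebra -/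

section Abstract

variable {A : Type} [CommRing A] [Algebra ℂ A]

lemma lie_smul_of_apply_eq_zero {P : Derivation ℂ A A} {a : A} (h : P a = 0)
    (W : Derivation ℂ A A) : ⁅P, a • W⁆ = a • ⁅P, W⁆ := by
  ext x
  simp [Derivation.commutator_apply, h, mul_sub]

/-- If `⁅D, P⁆ = -a • X₀`, the derivation `P` acts on the homogeneous derivations of weight `w`
killing `a` by a twisted Leibniz rule; this single identity drives all the computations. -/
lemma lie_lie_of_weight {D X0 P Z : Derivation ℂ A A} {a : A} {w : ℂ}
    (hP : ⁅D, P⁆ = -(a • X0)) (hZ : Z a = 0) (hw : ⁅X0, Z⁆ = w • Z) :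
    ⁅D, ⁅P, Z⁆⁆ = -(w • a • Z) + ⁅P, ⁅D, Z⁆⁆ := by
  rw [leibniz_lie D P Z, hP, neg_lie, ← lie_skew (a • X0) Z, lie_smul_of_apply_eq_zero hZ,
    neg_neg, ← lie_skew Z X0, hw, smul_neg, smul_comm a w]

lemma lie_weight_add {X0 P Z : Derivation ℂ A A} {v w : ℂ}
    (hP : ⁅X0, P⁆ = v • P) (hZ : ⁅X0, Z⁆ = w • Z) : ⁅X0, ⁅P, Z⁆⁆ = (v + w) • ⁅P, Z⁆ := by
  rw [leibniz_lie X0 P Z, hP, hZ, smul_lie, lie_smul, add_smul]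

/-- The derivation `Z` is vertical if it kills all the exponentials `e q`. -/
def Vertical (e : ℤ → A) (Z : Derivation ℂ A A) : Prop := ∀ q, Z (e q) = 0

lemma Vertical.lie {e : ℤ → A} {P Z : Derivation ℂ A A} (hP : Vertical e P) (hZ : Vertical e Z) :
    Vertical e ⁅P, Z⁆ := fun q => by simp [Derivation.commutator_apply, hP q, hZ q]

lemma Vertical.smul {e : ℤ → A} {Z : Derivation ℂ A A} (c : ℂ) (hZ : Vertical e Z) :
    Vertical e (c • Z) := fun q => by simp [hZ q]

lemma Vertical.add {e : ℤ → A} {P Z : Derivation ℂ A A} (hP : Vertical e P) (hZ : Vertical e Z) :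
    Vertical e (P + Z) := fun q => by simp [hP q, hZ q]

lemma Vertical.neg {e : ℤ → A} {Z : Derivation ℂ A A} (hZ : Vertical e Z) :
    Vertical e (-Z) := fun q => by simp [hZ q]

/-- The part of the induction hypothesis that opens a block `Z0 = Y'_{8k}`, `Z1 = Y'_{8k+1}`,
`Z2 = Y'_{8k+2}`, with `P = Y'₁` and `Q = Y'₂`. It makes sense for `Z0 = X₀` as well, since
`Z0` itself is not required to be vertical. -/
structure BlockStart (e : ℤ → A) (D X0 P Q Z0 Z1 Z2 : Derivation ℂ A A) : Prop where
  vert1 : Vertical e Z1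
  vert2 : Vertical e Z2
  weight1 : ⁅X0, Z1⁆ = (1 : ℂ) • Z1
  weight2 : ⁅X0, Z2⁆ = (-2 : ℂ) • Z2
  lieD1 : ⁅D, Z1⁆ = -(e 1 • Z0)
  lieD2 : ⁅D, Z2⁆ = -(e (-2) • Z0)
  lieP0 : ⁅P, Z0⁆ = -Z1
  lieQ0 : ⁅Q, Z0⁆ = (2 : ℂ) • Z2

/-- One period of the sequence: all the asserted brackets of the block follow from its start, and
so does the start of the next block. The brackets which do not enter the definition of the
sequence are found by `hvan`: a vertical derivation commuting with `D` vanishes. -/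
lemma block_step {e : ℤ → A} {D X0 P Q Z0 Z1 Z2 Z3 Z4 Z5 Z6 Z7 Z8 Z9 Z10 : Derivation ℂ A A}
    (hvan : ∀ Z : Derivation ℂ A A, Vertical e Z → ⁅D, Z⁆ = 0 → Z = 0)
    (hP : BlockStart e D X0 P Q X0 P Q) (hZ : BlockStart e D X0 P Q Z0 Z1 Z2)
    (h3 : Z3 = ⁅P, Z2⁆) (h4 : Z4 = ⁅P, Z3⁆) (h5 : Z5 = -(1 / 3 : ℂ) • ⁅P, Z4⁆)
    (h6 : Z6 = -(1 / 2 : ℂ) • ⁅P, Z5⁆) (h7 : Z7 = ⁅Q, Z5⁆) (h8 : Z8 = ⁅P, Z7⁆)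
    (h9 : Z9 = -⁅P, Z8⁆) (h10 : Z10 = (1 / 2 : ℂ) • ⁅Q, Z8⁆) :
    (⁅D, Z3⁆ = e (-2) • Z1 + (2 : ℂ) • e 1 • Z2 ∧
      ⁅D, Z4⁆ = (3 : ℂ) • e 1 • Z3 ∧
      ⁅D, Z5⁆ = -(e 1 • Z4) ∧
      ⁅D, Z6⁆ = -(e 1 • Z5) ∧
      ⁅D, Z7⁆ = -(e (-2) • Z5) ∧
      ⁅D, Z8⁆ = e 1 • Z7 + (2 : ℂ) • e (-2) • Z6 ∧
      ⁅Q, Z2⁆ = 0 ∧ ⁅Q, Z3⁆ = 0 ∧ ⁅Q, Z4⁆ = 0 ∧ ⁅Q, Z7⁆ = 0) ∧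
    (Vertical e Z3 ∧ Vertical e Z4 ∧ Vertical e Z5 ∧ Vertical e Z6 ∧ Vertical e Z7 ∧
      Vertical e Z8) ∧
    BlockStart e D X0 P Q Z8 Z9 Z10 := by
  have vP := hP.vert1
  have vQ := hP.vert2
  have v1 := hZ.vert1
  have v2 := hZ.vert2
  have v3 : Vertical e Z3 := h3 ▸ vP.lie v2
  have v4 : Vertical e Z4 := h4 ▸ vP.lie v3
  have v5 : Vertical e Z5 := h5 ▸ (vP.lie v4).smul _
  have v6 : Vertical e Z6 := h6 ▸ (vP.lie v5).smul _
  have v7 : Vertical e Z7 := h7 ▸ vQ.lie v5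
  have v8 : Vertical e Z8 := h8 ▸ vP.lie v7
  have v9 : Vertical e Z9 := h9 ▸ (vP.lie v8).neg
  have v10 : Vertical e Z10 := h10 ▸ (vQ.lie v8).smul _
  have wP := hP.weight1
  have wQ := hP.weight2
  have w1 := hZ.weight1
  have w2 := hZ.weight2
  have w3 : ⁅X0, Z3⁆ = (-1 : ℂ) • Z3 := by
    rw [h3, lie_weight_add wP w2]; norm_num
  have w4 : ⁅X0, Z4⁆ = (0 : ℂ) • Z4 := by
    rw [h4, lie_weight_add wP w3]; norm_num
  have w5 : ⁅X0, Z5⁆ = (1 : ℂ) • Z5 := by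
    rw [h5, lie_smul, lie_weight_add wP w4]; norm_num
  have w6 : ⁅X0, Z6⁆ = (2 : ℂ) • Z6 := by
    rw [h6, lie_smul, lie_weight_add wP w5, smul_comm]; norm_num
  have w7 : ⁅X0, Z7⁆ = (-1 : ℂ) • Z7 := by
    rw [h7, lie_weight_add wQ w5]; norm_num
  have w8 : ⁅X0, Z8⁆ = (0 : ℂ) • Z8 := by
    rw [h8, lie_weight_add wP w7]; norm_num
  have w9 : ⁅X0, Z9⁆ = (1 : ℂ) • Z9 := by
    rw [h9, lie_neg, lie_weight_add wP w8]; norm_num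
  have w10 : ⁅X0, Z10⁆ = (-2 : ℂ) • Z10 := by
    rw [h10, lie_smul, lie_weight_add wQ w8, smul_comm]; norm_num
  -- the defining relations, solved for the brackets
  have p2 : ⁅P, Z2⁆ = Z3 := h3.symm
  have p3 : ⁅P, Z3⁆ = Z4 := h4.symm
  have p4 : ⁅P, Z4⁆ = (-3 : ℂ) • Z5 := by rw [h5]; module
  have p5 : ⁅P, Z5⁆ = (-2 : ℂ) • Z6 := by rw [h6]; module
  have q5 : ⁅Q, Z5⁆ = Z7 := h7.symm
  have p7 : ⁅P, Z7⁆ = Z8 := h8.symm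
  have p8 : ⁅P, Z8⁆ = -Z9 := by rw [h9, neg_neg]
  have q8 : ⁅Q, Z8⁆ = (2 : ℂ) • Z10 := by rw [h10]; module
  have DP {Z : Derivation ℂ A A} {w : ℂ} (hv : Vertical e Z) (hw : ⁅X0, Z⁆ = w • Z) :
      ⁅D, ⁅P, Z⁆⁆ = -(w • e 1 • Z) + ⁅P, ⁅D, Z⁆⁆ := lie_lie_of_weight hP.lieD1 (hv 1) hw
  have DQ {Z : Derivation ℂ A A} {w : ℂ} (hv : Vertical e Z) (hw : ⁅X0, Z⁆ = w • Z) :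
      ⁅D, ⁅Q, Z⁆⁆ = -(w • e (-2) • Z) + ⁅Q, ⁅D, Z⁆⁆ := lie_lie_of_weight hP.lieD2 (hv (-2)) hw
  have Pe (q : ℤ) (W : Derivation ℂ A A) : ⁅P, e q • W⁆ = e q • ⁅P, W⁆ :=
    lie_smul_of_apply_eq_zero (vP q) W
  have Qe (q : ℤ) (W : Derivation ℂ A A) : ⁅Q, e q • W⁆ = e q • ⁅Q, W⁆ :=
    lie_smul_of_apply_eq_zero (vQ q) W
  have p1 : ⁅P, Z1⁆ = 0 := hvan _ (vP.lie v1) (by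
    rw [DP v1 w1, hZ.lieD1, lie_neg, Pe, hZ.lieP0]; module)
  have d3 : ⁅D, Z3⁆ = e (-2) • Z1 + (2 : ℂ) • e 1 • Z2 := by
    rw [h3, DP v2 w2, hZ.lieD2, lie_neg, Pe, hZ.lieP0]; module
  have q1 : ⁅Q, Z1⁆ = -Z3 := eq_neg_of_add_eq_zero_left <| hvan _ ((vQ.lie v1).add v3) (by
    rw [lie_add, d3, DQ v1 w1, hZ.lieD1, lie_neg, Qe, hZ.lieQ0]; module)
  have d4 : ⁅D, Z4⁆ = (3 : ℂ) • e 1 • Z3 := by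
    rw [h4, DP v3 w3, d3, lie_add, lie_smul (2 : ℂ), Pe, Pe, p1, p2, smul_zero (e (-2))]
    -- hiding the scalar `e 1 : A` leaves an identity with scalars in the field `ℂ` only, where
    -- `module` can evaluate numerals (likewise below)
    generalize e 1 • Z3 = W
    module
  have d5 : ⁅D, Z5⁆ = -(e 1 • Z4) := by
    rw [h5, lie_smul, DP v4 w4, d4, lie_smul (3 : ℂ), Pe, p3]
    generalize e 1 • Z4 = W
    module
  have d6 : ⁅D, Z6⁆ = -(e 1 • Z5) := by
    rw [h6, lie_smul, DP v5 w5, d5, lie_neg, Pe, p4, smul_comm (e 1)]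
    generalize e 1 • Z5 = W
    module
  have p6 : ⁅P, Z6⁆ = 0 := hvan _ (vP.lie v6) (by
    rw [DP v6 w6, d6, lie_neg, Pe, p5]; module)
  have q2 : ⁅Q, Z2⁆ = 0 := hvan _ (vQ.lie v2) (by
    rw [DQ v2 w2, hZ.lieD2, lie_neg, Qe, hZ.lieQ0]; module)
  have q3 : ⁅Q, Z3⁆ = 0 := hvan _ (vQ.lie v3) (by
    rw [DQ v3 w3, d3, lie_add, lie_smul (2 : ℂ), Qe, Qe, q1, q2]; module)
  have q4 : ⁅Q, Z4⁆ = 0 := hvan _ (vQ.lie v4) (by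
    rw [DQ v4 w4, d4, lie_smul (3 : ℂ), Qe, q3]; module)
  have d7 : ⁅D, Z7⁆ = -(e (-2) • Z5) := by
    rw [h7, DQ v5 w5, d5, lie_neg, Qe, q4]; module
  have q7 : ⁅Q, Z7⁆ = 0 := hvan _ (vQ.lie v7) (by
    rw [DQ v7 w7, d7, lie_neg, Qe, q5]; module)
  have d8 : ⁅D, Z8⁆ = e 1 • Z7 + (2 : ℂ) • e (-2) • Z6 := by
    rw [h8, DP v7 w7, d7, lie_neg, Pe, p5]; module
  have q6 : ⁅Q, Z6⁆ = -Z8 := eq_neg_of_add_eq_zero_left <| hvan _ ((vQ.lie v6).add v8) (by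
    rw [lie_add, d8, DQ v6 w6, d6, lie_neg, Qe, q5]; module)
  have d9 : ⁅D, Z9⁆ = -(e 1 • Z8) := by
    rw [h9, lie_neg, DP v8 w8, d8, lie_add, lie_smul (2 : ℂ), Pe, Pe, p7, p6]; module
  have d10 : ⁅D, Z10⁆ = -(e (-2) • Z8) := by
    rw [h10, lie_smul, DQ v8 w8, d8, lie_add, lie_smul (2 : ℂ), Qe, Qe, q7, q6,
      smul_neg (e (-2)), smul_zero (e 1)]
    generalize e (-2) • Z8 = W
    module
  exact ⟨⟨d3, d4, d5, d6, d7, d8, q2, q3, q4, q7⟩, ⟨v3, v4, v5, v6, v7, v8⟩,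
    ⟨v9, v10, w9, w10, d9, d10, p8, q8⟩⟩

lemma neg_smul_eq_smul (a : A) (Z : Derivation ℂ A A) : -(a • Z) = (-1 : ℂ) • a • Z := by
  module

/-- The weight of `X` under `ad X₀` is read off from `⁅D, X⁆ = -a • X₀`: by the weight of `a`, the
vertical derivation `⁅X₀, X⁆ - w • X` commutes with `D`. -/
lemma lie_eq_smul_of_lie {e : ℤ → A} {D X0 X : Derivation ℂ A A} {a : A} {w : ℂ}
    (hvan : ∀ Z : Derivation ℂ A A, Vertical e Z → ⁅D, Z⁆ = 0 → Z = 0)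
    (hX0 : ∀ q, X0 (e q) = q • e q) (hDX0 : ⁅D, X0⁆ = 0) (hDX : ⁅D, X⁆ = -(a • X0))
    (ha : X0 a = w • a) (hX : Vertical e X) : ⁅X0, X⁆ = w • X := by
  rw [← sub_eq_zero]
  refine hvan _ (fun q => ?_) ?_
  · simp [Derivation.commutator_apply, hX q, hX0]
  · rw [lie_sub, leibniz_lie, hDX0, zero_lie, zero_add, lie_smul, hDX, lie_neg]
    ext x
    simp only [Derivation.sub_apply, Derivation.neg_apply, Derivation.commutator_apply,
      Derivation.smul_apply, smul_eq_mul, Derivation.leibniz, ha, Derivation.coe_zero,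
      Pi.zero_apply]
    simp only [Algebra.smul_def]
    ring

/-- The sequence itself starts with a `BlockStart`, with `Z0 = X₀`. -/
lemma blockStart_zero {e : ℤ → A} {D X0 P Q : Derivation ℂ A A}
    (hvan : ∀ Z : Derivation ℂ A A, Vertical e Z → ⁅D, Z⁆ = 0 → Z = 0)
    (hX0 : ∀ q, X0 (e q) = q • e q) (hDX0 : ⁅D, X0⁆ = 0)
    (hP : Vertical e P) (hQ : Vertical e Q)
    (hDP : ⁅D, P⁆ = -(e 1 • X0)) (hDQ : ⁅D, Q⁆ = -(e (-2) • X0)) :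
    BlockStart e D X0 P Q X0 P Q := by
  have wP : ⁅X0, P⁆ = (1 : ℂ) • P :=
    lie_eq_smul_of_lie hvan hX0 hDX0 hDP (by rw [hX0]; module) hP
  have wQ : ⁅X0, Q⁆ = (-2 : ℂ) • Q :=
    lie_eq_smul_of_lie hvan hX0 hDX0 hDQ (by rw [hX0]; module) hQ
  exact ⟨hP, hQ, wP, wQ, hDP, hDQ, by rw [← lie_skew, wP]; module, by rw [← lie_skew, wQ]; module⟩

end Abstract

/-! ### Vertical derivations of `QP` commuting with `D` -/

lemma E_mul (p q : ℤ) : E p * E q = E (p + q) := by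
  rw [E, E, E, AddMonoidAlgebra.single_mul_single, mul_one]

lemma E_zero : E 0 = 1 := rfl

lemma E_ne_zero (q : ℤ) : E q ≠ 0 :=
  AddMonoidAlgebra.single_ne_zero.2 one_ne_zero

lemma eq_zero_of_mul_E {x : QP} {q : ℤ} (h : x * E q = 0) : x = 0 := by
  have := congrArg (· * E (-q)) h
  simpa [mul_assoc, E_mul, E_zero] using this

/-- A derivation of `QP` is determined by its values on the exponentials and the variables. -/
lemma derivation_eq_zero {Z : Derivation ℂ QP QP} (hE : Vertical E Z)
    (hu : ∀ n, 1 ≤ n → Z (uvar n) = 0) : Z = 0 := by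
  have key (p : MvPolynomial ℕ ℂ) : Z (AddMonoidAlgebra.single 0 p) = 0 := by
    induction p using MvPolynomial.induction_on with
    | C c => exact Z.map_algebraMap c
    | add p q hp hq => rw [AddMonoidAlgebra.single_add, map_add, hp, hq, add_zero]
    | mul_X p i hp =>
      have hX : Z (AddMonoidAlgebra.single 0 (MvPolynomial.X i)) = 0 := hu (i + 1) (by omega)
      have : (AddMonoidAlgebra.single 0 (p * MvPolynomial.X i) : QP) =
          AddMonoidAlgebra.single 0 p * AddMonoidAlgebra.single 0 (MvPolynomial.X i) := by
        rw [AddMonoidAlgebra.single_mul_single, add_zero]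
      rw [this, Derivation.leibniz, hp, hX, smul_zero, smul_zero, add_zero]
  refine Derivation.ext fun a => ?_
  induction a using AddMonoidAlgebra.induction_linear with
  | zero => simp
  | add f g hf hg => rw [map_add, hf, hg]; simp
  | single q p =>
    have : (AddMonoidAlgebra.single q p : QP) = AddMonoidAlgebra.single 0 p * E q := by
      rw [E, AddMonoidAlgebra.single_mul_single, zero_add, mul_one]
    rw [this, Derivation.leibniz, key, hE q]
    simp

lemma derivation_ext {Z W : Derivation ℂ QP QP} (hE : ∀ q, Z (E q) = W (E q))
    (hu : ∀ n, 1 ≤ n → Z (uvar n) = W (uvar n)) : Z = W :=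
  sub_eq_zero.1 <| derivation_eq_zero (fun q => sub_eq_zero.2 (hE q))
    fun n hn => sub_eq_zero.2 (hu n hn)

lemma apply_uvar_one {D Z : Derivation ℂ QP QP} (hD : IsD D) (hZ : Vertical E Z)
    (hW : Vertical E ⁅D, Z⁆) : Z (uvar 1) = 0 := by
  have h := hW 1
  rw [Derivation.commutator_apply, hZ 1, map_zero, hD.2, one_smul, Derivation.leibniz, hZ 1,
    smul_zero, zero_add, zero_sub, neg_eq_zero, smul_eq_mul, mul_comm] at h
  exact eq_zero_of_mul_E h

lemma apply_uvar_succ {D Z : Derivation ℂ QP QP} (hD : IsD D) {n : ℕ} (hn : 1 ≤ n)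
    (h : Z (uvar n) = 0) : Z (uvar (n + 1)) = -⁅D, Z⁆ (uvar n) := by
  rw [Derivation.commutator_apply, hD.1 n hn, h, map_zero, zero_sub, neg_neg]

/-- The hypothesis `hvan` of the abstract lemmas holds in `QP`. -/
lemma eq_zero_of_lie_D {D : Derivation ℂ QP QP} (hD : IsD D) (Z : Derivation ℂ QP QP)
    (hZ : Vertical E Z) (h : ⁅D, Z⁆ = 0) : Z = 0 := by
  refine derivation_eq_zero hZ fun n hn => ?_
  induction n, hn using Nat.le_induction with
  | base => exact apply_uvar_one hD hZ (by simp [h, Vertical])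
  | succ n hn ih => rw [apply_uvar_succ hD hn ih, h]; simp

/-! ### Leading values -/

/-- `Z` is vertical, kills `u₁, …, uₙ`, and has the leading value `Z u_{n+1} = c • E q`. -/
structure Lead (Z : Derivation ℂ QP QP) (n : ℕ) (c : ℂ) (q : ℤ) : Prop where
  vert : Vertical E Z
  zero : ∀ j, 1 ≤ j → j ≤ n → Z (uvar j) = 0
  lead : Z (uvar (n + 1)) = c • E q

lemma Lead.ne_zero {Z : Derivation ℂ QP QP} {n : ℕ} {c : ℂ} {q : ℤ} (h : Lead Z n c q)
    (hc : c ≠ 0) : Z ≠ 0 := by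
  rintro rfl
  have := h.lead
  simp only [Derivation.coe_zero, Pi.zero_apply] at this
  exact (smul_ne_zero hc (E_ne_zero q)) this.symm

lemma Lead.smulE {Z : Derivation ℂ QP QP} {n : ℕ} {c : ℂ} {q : ℤ} (h : Lead Z n c q)
    (d : ℂ) (p : ℤ) : Lead (d • E p • Z) n (d * c) (p + q) where
  vert r := by simp [h.vert r]
  zero j h1 h2 := by simp [h.zero j h1 h2]
  lead := by simp [h.lead, E_mul, mul_smul]

lemma Lead.add {Z W : Derivation ℂ QP QP} {n : ℕ} {c d : ℂ} {q : ℤ} (h : Lead Z n c q)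
    (h' : Lead W n d q) : Lead (Z + W) n (c + d) q where
  vert := h.vert.add h'.vert
  zero j h1 h2 := by simp [h.zero j h1 h2, h'.zero j h1 h2]
  lead := by simp [h.lead, h'.lead, add_smul]

/-- Leading values propagate from `⁅D, Z⁆` to `Z`, since `Z u_{j+1} = D (Z u_j) - ⁅D, Z⁆ u_j`. -/
lemma Lead.of_lie {D Z : Derivation ℂ QP QP} {n : ℕ} {c : ℂ} {q : ℤ} (hD : IsD D)
    (hZ : Vertical E Z) (h : Lead ⁅D, Z⁆ n c q) : Lead Z (n + 1) (-c) q := by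
  have hz : ∀ j, 1 ≤ j → j ≤ n + 1 → Z (uvar j) = 0 := by
    intro j hj
    induction j, hj using Nat.le_induction with
    | base => exact fun _ => apply_uvar_one hD hZ h.vert
    | succ j hj ih =>
      intro hjn
      rw [apply_uvar_succ hD hj (ih (by omega)), h.zero j hj (by omega), neg_zero]
  exact ⟨hZ, hz, by rw [apply_uvar_succ hD (by omega) (hz _ (by omega) le_rfl), h.lead, neg_smul]⟩

lemma Lead.of_eq {D Z W : Derivation ℂ QP QP} {n : ℕ} {c c' : ℂ} {q q' : ℤ} (hD : IsD D)
    (hZ : Vertical E Z) (h : ⁅D, Z⁆ = W) (hW : Lead W n c q) (hc : c' = -c) (hq : q' = q) :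
    Lead Z (n + 1) c' q' := by
  subst hc hq
  exact Lead.of_lie hD hZ (h ▸ hW)

/-! ### The derivations `X₀` and `X_f` -/

lemma lie_D_X0 {D X0 : Derivation ℂ QP QP} (hD : IsD D) (hX0 : IsX0 X0) : ⁅D, X0⁆ = 0 := by
  refine derivation_eq_zero (fun q => ?_) fun n hn => ?_
  · rw [Derivation.commutator_apply, hX0.2, hD.2, map_zsmul, map_zsmul, Derivation.leibniz, hX0.2,
      hX0.1 1 le_rfl, hD.2, smul_zero, add_zero, smul_eq_mul, mul_smul_comm, sub_self]
  · rw [Derivation.commutator_apply, hX0.1 n hn, hD.1 n hn, hX0.1 _ (by omega), map_zero, sub_zero]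

lemma lie_D_Xf {D X0 X : Derivation ℂ QP QP} {f : QP} (hD : IsD D) (hX0 : IsX0 X0)
    (hX : IsXf D f X) : ⁅D, X⁆ = -(f • X0) := by
  refine derivation_ext (fun q => ?_) fun n hn => ?_
  · have h1 : X (uvar 1) = f := hX.2 1 le_rfl
    change _ = -(f * X0 (E q))
    rw [Derivation.commutator_apply, hX.1, hX0.2, hD.2, map_zsmul, Derivation.leibniz, hX.1, h1,
      map_zero]
    simp [mul_comm, mul_assoc]
  · obtain ⟨m, rfl⟩ : ∃ m, n = m + 1 := ⟨n - 1, by omega⟩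
    change _ = -(f * X0 (uvar (m + 1)))
    rw [Derivation.commutator_apply, hX0.1 _ hn, hD.1 _ hn, hX.2 _ hn, hX.2 _ (by omega)]
    simp only [Nat.add_sub_cancel, Function.iterate_succ_apply', sub_self, mul_zero, neg_zero]

lemma Lead.ofXf {D X : Derivation ℂ QP QP} {q : ℤ} (hX : IsXf D (E q) X) : Lead X 0 1 q where
  vert := hX.1
  zero j h1 h2 := by omega
  lead := by simpa using hX.2 1 le_rfl

/-! ### The Tzitzeica sequence -/

/-- For the Tzitzeica sequence `Y'₀ := X₀`, `Y'₁ := X_{E 1}`, `Y'₂ := X_{E (-2)}`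
and, for `k ≥ 0`, `Y'_{8k+3} := ⁅Y'₁, Y'_{8k+2}⁆`, `Y'_{8k+4} := ⁅Y'₁, Y'_{8k+3}⁆`,
`Y'_{8k+5} := -(1/3) • ⁅Y'₁, Y'_{8k+4}⁆`, `Y'_{8k+6} := -(1/2) • ⁅Y'₁, Y'_{8k+5}⁆`,
`Y'_{8k+7} := ⁅Y'₂, Y'_{8k+5}⁆`, `Y'_{8k+8} := ⁅Y'₁, Y'_{8k+7}⁆`,
`Y'_{8k+9} := -⁅Y'₁, Y'_{8k+8}⁆`, `Y'_{8k+10} := (1/2) • ⁅Y'₂, Y'_{8k+8}⁆`: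
for every `k ≥ 0` the derivations `Y'_{8k+1}, …, Y'_{8k+8}` are nonzero, the
bracket with the total derivative `D` is as listed, and `Y'₂` commutes with
`Y'_{8k+2}, Y'_{8k+3}, Y'_{8k+4}, Y'_{8k+7}`. -/
theorem stmt_14 (D X0 : Derivation ℂ QP QP) (Ys : ℕ → Derivation ℂ QP QP)
    (hD : IsD D) (hX0 : IsX0 X0) (hYs0 : Ys 0 = X0)
    (hYs1 : IsXf D (E 1) (Ys 1)) (hYs2 : IsXf D (E (-2)) (Ys 2))
    (hrec : ∀ k : ℕ,
      Ys (8 * k + 3) = ⁅Ys 1, Ys (8 * k + 2)⁆ ∧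
      Ys (8 * k + 4) = ⁅Ys 1, Ys (8 * k + 3)⁆ ∧
      Ys (8 * k + 5) = -(1 / 3 : ℂ) • ⁅Ys 1, Ys (8 * k + 4)⁆ ∧
      Ys (8 * k + 6) = -(1 / 2 : ℂ) • ⁅Ys 1, Ys (8 * k + 5)⁆ ∧
      Ys (8 * k + 7) = ⁅Ys 2, Ys (8 * k + 5)⁆ ∧
      Ys (8 * k + 8) = ⁅Ys 1, Ys (8 * k + 7)⁆ ∧
      Ys (8 * k + 9) = -⁅Ys 1, Ys (8 * k + 8)⁆ ∧
      Ys (8 * k + 10) = (1 / 2 : ℂ) • ⁅Ys 2, Ys (8 * k + 8)⁆) :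
    ∀ k : ℕ,
      (∀ r : ℕ, 1 ≤ r → r ≤ 8 → Ys (8 * k + r) ≠ 0) ∧
      ⁅D, Ys (8 * k + 1)⁆ = -((E 1) • Ys (8 * k)) ∧
      ⁅D, Ys (8 * k + 2)⁆ = -((E (-2)) • Ys (8 * k)) ∧
      ⁅D, Ys (8 * k + 3)⁆ = (E (-2)) • Ys (8 * k + 1) + (2 : ℂ) • (E 1) • Ys (8 * k + 2) ∧
      ⁅D, Ys (8 * k + 4)⁆ = (3 : ℂ) • (E 1) • Ys (8 * k + 3) ∧
      ⁅D, Ys (8 * k + 5)⁆ = -((E 1) • Ys (8 * k + 4)) ∧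
      ⁅D, Ys (8 * k + 6)⁆ = -((E 1) • Ys (8 * k + 5)) ∧
      ⁅D, Ys (8 * k + 7)⁆ = -((E (-2)) • Ys (8 * k + 5)) ∧
      ⁅D, Ys (8 * k + 8)⁆ = (E 1) • Ys (8 * k + 7) + (2 : ℂ) • (E (-2)) • Ys (8 * k + 6) ∧
      ⁅Ys 2, Ys (8 * k + 2)⁆ = 0 ∧ ⁅Ys 2, Ys (8 * k + 3)⁆ = 0 ∧
      ⁅Ys 2, Ys (8 * k + 4)⁆ = 0 ∧ ⁅Ys 2, Ys (8 * k + 7)⁆ = 0 := by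
  have hP : BlockStart E D X0 (Ys 1) (Ys 2) X0 (Ys 1) (Ys 2) :=
    blockStart_zero (eq_zero_of_lie_D hD) hX0.2 (lie_D_X0 hD hX0) hYs1.1 hYs2.1
      (lie_D_Xf hD hX0 hYs1) (lie_D_Xf hD hX0 hYs2)
  have hstep (k : ℕ) (hk : BlockStart E D X0 (Ys 1) (Ys 2) (Ys (8 * k)) (Ys (8 * k + 1))
      (Ys (8 * k + 2))) := by
    obtain ⟨h3, h4, h5, h6, h7, h8, h9, h10⟩ := hrec k
    exact block_step (eq_zero_of_lie_D hD) hP hk h3 h4 h5 h6 h7 h8 h9 h10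
  have hstart (k : ℕ) : BlockStart E D X0 (Ys 1) (Ys 2) (Ys (8 * k)) (Ys (8 * k + 1))
      (Ys (8 * k + 2)) := by
    induction k with
    | zero => simpa only [mul_zero, zero_add, hYs0] using hP
    | succ k ih => exact (hstep k ih).2.2
  -- leading values along one period; `n` grows by `6` and `c` is multiplied by `-27`
  have hlead (k : ℕ) (n : ℕ) (c : ℂ) (l1 : Lead (Ys (8 * k + 1)) n c 1)
      (l2 : Lead (Ys (8 * k + 2)) n c (-2)) :
      Lead (Ys (8 * k + 3)) (n + 1) (-3 * c) (-1) ∧ Lead (Ys (8 * k + 4)) (n + 2) (9 * c) 0 ∧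
      Lead (Ys (8 * k + 5)) (n + 3) (9 * c) 1 ∧ Lead (Ys (8 * k + 6)) (n + 4) (9 * c) 2 ∧
      Lead (Ys (8 * k + 7)) (n + 4) (9 * c) (-1) ∧ Lead (Ys (8 * k + 8)) (n + 5) (-27 * c) 0 ∧
      Lead (Ys (8 * k + 9)) (n + 6) (-27 * c) 1 ∧
      Lead (Ys (8 * k + 10)) (n + 6) (-27 * c) (-2) := by
    obtain ⟨⟨d3, d4, d5, d6, d7, d8, -⟩, ⟨v3, v4, v5, v6, v7, v8⟩, hb⟩ := hstep k (hstart k)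
    have l3 : Lead (Ys (8 * k + 3)) (n + 1) (-3 * c) (-1) :=
      Lead.of_eq hD v3 (by rw [d3, one_smul]) ((l1.smulE 1 (-2)).add (l2.smulE 2 1))
        (by ring) (by norm_num)
    have l4 : Lead (Ys (8 * k + 4)) (n + 2) (9 * c) 0 :=
      Lead.of_eq hD v4 d4 (l3.smulE 3 1) (by ring) (by norm_num)
    have l5 : Lead (Ys (8 * k + 5)) (n + 3) (9 * c) 1 :=
      Lead.of_eq hD v5 (d5.trans (neg_smul_eq_smul _ _)) (l4.smulE (-1) 1) (by ring) (by norm_num)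
    have l6 : Lead (Ys (8 * k + 6)) (n + 4) (9 * c) 2 :=
      Lead.of_eq hD v6 (d6.trans (neg_smul_eq_smul _ _)) (l5.smulE (-1) 1) (by ring) (by norm_num)
    have l7 : Lead (Ys (8 * k + 7)) (n + 4) (9 * c) (-1) :=
      Lead.of_eq hD v7 (d7.trans (neg_smul_eq_smul _ _)) (l5.smulE (-1) (-2)) (by ring) (by norm_num)
    have l8 : Lead (Ys (8 * k + 8)) (n + 5) (-27 * c) 0 :=
      Lead.of_eq hD v8 (by rw [d8, one_smul]) ((l7.smulE 1 1).add (l6.smulE 2 (-2)))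
        (by ring) (by norm_num)
    have l9 : Lead (Ys (8 * k + 9)) (n + 6) (-27 * c) 1 :=
      Lead.of_eq hD hb.vert1 (hb.lieD1.trans (neg_smul_eq_smul _ _)) (l8.smulE (-1) 1)
        (by ring) (by norm_num)
    have l10 : Lead (Ys (8 * k + 10)) (n + 6) (-27 * c) (-2) :=
      Lead.of_eq hD hb.vert2 (hb.lieD2.trans (neg_smul_eq_smul _ _)) (l8.smulE (-1) (-2))
        (by ring) (by norm_num)
    exact ⟨l3, l4, l5, l6, l7, l8, l9, l10⟩
  have hlead12 (k : ℕ) : ∃ n c, c ≠ 0 ∧ Lead (Ys (8 * k + 1)) n c 1 ∧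
      Lead (Ys (8 * k + 2)) n c (-2) := by
    induction k with
    | zero => exact ⟨0, 1, one_ne_zero, Lead.ofXf hYs1, Lead.ofXf hYs2⟩
    | succ k ih =>
      obtain ⟨n, c, hc, l1, l2⟩ := ih
      obtain ⟨-, -, -, -, -, -, l9, l10⟩ := hlead k n c l1 l2
      exact ⟨n + 6, -27 * c, by simpa using hc, l9, l10⟩
  intro k
  refine ⟨fun r h1 h8 => ?_, (hstart k).lieD1, (hstart k).lieD2, (hstep k (hstart k)).1⟩
  obtain ⟨n, c, hc, l1, l2⟩ := hlead12 k
  obtain ⟨l3, l4, l5, l6, l7, l8, -⟩ := hlead k n c l1 l2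
  have h3 : -3 * c ≠ 0 := by simpa using hc
  have h9 : 9 * c ≠ 0 := by simpa using hc
  have h27 : -27 * c ≠ 0 := by simpa using hc
  interval_cases r
  exacts [l1.ne_zero hc, l2.ne_zero hc, l3.ne_zero h3, l4.ne_zero h9, l5.ne_zero h9,
    l6.ne_zero h9, l7.ne_zero h9, l8.ne_zero h27]
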